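/- Let A be an open subset of ℝ⁴ and φ : A → ℂ a smooth map with ∑ᵢ₌₀³ ∂²φ/∂xᵢ² = 0 and ∑ᵢ₌₀³ (∂φ/∂xᵢ)² = 0 on A (a harmonic morphism to ℂ). Let ι : ℝ⁴ → ℂ⁴ be the inclusion of real points. Then there exist an open set Ω ⊆ ℂ⁴ containing ι(A) and a holomorphic map Φ : Ω → ℂ such that Φ(ι(x)) = φ(x) for all x ∈ A and, on Ω, ∑ᵢ₌₀³ ∂²Φ/∂zᵢ² = 0 and ∑ᵢ₌₀³ (∂Φ/∂zᵢ)² = 0. -/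

import Mathlib

noncomputable section

/-- Real partial derivative in the `i`-th coordinate direction of a map `ℝ⁴ → ℂ`. -/
def pd (i : Fin 4) (f : (Fin 4 → ℝ) → ℂ) (x : Fin 4 → ℝ) : ℂ :=
  fderiv ℝ f x (Pi.single i 1)

/-- Complex partial derivative in the `i`-th coordinate direction of a map `ℂ⁴ → ℂ`. -/
def pdC (i : Fin 4) (f : (Fin 4 → ℂ) → ℂ) (z : Fin 4 → ℂ) : ℂ :=
  fderiv ℂ f z (Pi.single i 1)

/-- The inclusion of the real points `ℝ⁴ ↪ ℂ⁴`. -/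
def iotaR (x : Fin 4 → ℝ) : Fin 4 → ℂ := fun i => (x i : ℂ)

theorem isOpen_ball_stuff_re (x : Fin 4 → ℝ) (δ : ℝ) (z : Fin 4 → ℂ)
    (hz : z ∈ Metric.ball (iotaR x) δ) :
    iotaR (fun i => (z i).re) ∈ Metric.ball (iotaR x) δ := by
  rw [mem_ball_iff_norm] at hz ⊢
  refine lt_of_le_of_lt ?_ hz
  rw [pi_norm_le_iff_of_nonneg (norm_nonneg _)]
  intro i
  refine le_trans ?_ (norm_le_pi_norm _ i)
  have : (iotaR (fun i => (z i).re) - iotaR x) i = (((z - iotaR x) i).re : ℂ) := by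
    simp [iotaR]
  rw [this, Complex.norm_real]
  exact Complex.abs_re_le_norm _

theorem ident_real (U : Set (Fin 4 → ℂ)) (hU : IsOpen U) (hc : Convex ℝ U)
    (hre : ∀ z ∈ U, iotaR (fun i => (z i).re) ∈ U) (f : (Fin 4 → ℂ) → ℂ)
    (hf : DifferentiableOn ℂ f U) (h0 : ∀ x, iotaR x ∈ U → f (iotaR x) = 0) :
    ∀ z ∈ U, f z = 0 := by
  intro z hz
  set a := iotaR (fun i => (z i).re) with ha
  set b := iotaR (fun i => (z i).im) with hb
  let L : ℂ → (Fin 4 → ℂ) := fun w => a + w • b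
  have hL : Differentiable ℂ L := by fun_prop
  let V := L ⁻¹' U
  have hV : IsOpen V := hU.preimage hL.continuous
  have hVc : Convex ℝ V := by
    intro p hp q hq s t hs ht hst
    have := hc hp hq hs ht hst
    have e : L (s • p + t • q) = s • L p + t • L q := by
      have : (s : ℂ) + t = 1 := by exact_mod_cast hst
      funext i
      simp only [L, Pi.add_apply, Pi.smul_apply, smul_eq_mul, Complex.real_smul]
      linear_combination (-(a i)) * this
    show L _ ∈ U
    rw [e]; exact this
  have hg : AnalyticOnNhd ℂ (f ∘ L) V :=
    (hf.comp hL.differentiableOn (fun w hw => hw)).analyticOnNhd hV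
  have h0V : (0 : ℂ) ∈ V := by
    show L 0 ∈ U
    simpa [L] using hre z hz
  have hIV : L Complex.I = z := by
    funext i
    simp [L, a, b, iotaR, mul_comm Complex.I]
  have hfreq : ∃ᶠ w in nhdsWithin (0 : ℂ) {0}ᶜ, (f ∘ L) w = 0 := by
    have ht : Filter.Tendsto (fun t : ℝ => (t : ℂ)) (nhdsWithin 0 {0}ᶜ) (nhdsWithin 0 {0}ᶜ) := by
      apply tendsto_nhdsWithin_of_tendsto_nhds_of_eventually_within
      · have : Continuous (fun t : ℝ => (t : ℂ)) := Complex.continuous_ofReal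
        exact (this.tendsto' 0 0 (by simp)).mono_left nhdsWithin_le_nhds
      · filter_upwards [self_mem_nhdsWithin] with t ht
        simpa using ht
    refine ht.frequently (Filter.Eventually.frequently ?_)
    have : ∀ᶠ w in nhdsWithin (0 : ℂ) {0}ᶜ, w ∈ V := nhdsWithin_le_nhds (hV.mem_nhds h0V)
    filter_upwards [ht.eventually this] with t htV
    have e : L t = iotaR (fun i => (z i).re + t * (z i).im) := by
      funext i
      simp [L, a, b, iotaR]
    have htV' : L t ∈ U := htV
    show f (L t) = 0
    rw [e] at htV' ⊢
    exact h0 _ htV'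
  have := hg.eqOn_zero_of_preconnected_of_frequently_eq_zero hVc.isPreconnected h0V hfreq
    (show Complex.I ∈ V by show L _ ∈ U; rw [hIV]; exact hz)
  simpa [hIV] using this

theorem pdC_eq_pd (i : Fin 4) (F : (Fin 4 → ℂ) → ℂ) (f : (Fin 4 → ℝ) → ℂ) (x : Fin 4 → ℝ)
    (hF : DifferentiableAt ℂ F (iotaR x)) (h : ∀ᶠ y in nhds x, F (iotaR y) = f y) :
    pdC i F (iotaR x) = pd i f x := by
  let I : (Fin 4 → ℝ) →L[ℝ] (Fin 4 → ℂ) :=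
    ContinuousLinearMap.pi fun j => Complex.ofRealCLM.comp (ContinuousLinearMap.proj j)
  have hI : ∀ y, I y = iotaR y := fun y => rfl
  have h1 : HasFDerivAt (fun y => F (iotaR y)) (((fderiv ℂ F (iotaR x)).restrictScalars ℝ).comp I) x := by
    have := (hF.hasFDerivAt.restrictScalars ℝ)
    rw [← hI] at this
    exact this.comp x I.hasFDerivAt
  have h2 : fderiv ℝ f x = _ := (h1.congr_of_eventuallyEq (h.mono fun y hy => hy.symm)).fderiv
  unfold pdC pd
  rw [h2]
  simp only [ContinuousLinearMap.comp_apply, ContinuousLinearMap.coe_restrictScalars']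
  congr 1
  funext j
  rw [hI]
  by_cases hj : j = i
  · subst hj; simp [iotaR]
  · simp [iotaR, hj]

theorem glue
    (A : Set (Fin 4 → ℝ)) (φ : (Fin 4 → ℝ) → ℂ)
    (hlap : ∀ x ∈ A, ∑ i : Fin 4, pd i (pd i φ) x = 0)
    (hconf : ∀ x ∈ A, ∑ i : Fin 4, (pd i φ x) ^ 2 = 0)
    (hloc : ∀ x ∈ A, ∃ δ > 0, ∃ F : (Fin 4 → ℂ) → ℂ, 
      DifferentiableOn ℂ F (Metric.ball (iotaR x) δ) ∧ 
      (∀ i, DifferentiableOn ℂ (pdC i F) (Metric.ball (iotaR x) δ)) ∧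
      (∀ i, DifferentiableOn ℂ (pdC i (pdC i F)) (Metric.ball (iotaR x) δ)) ∧
      (∀ y, iotaR y ∈ Metric.ball (iotaR x) δ → y ∈ A ∧ F (iotaR y) = φ y)) :
    ∃ Ω : Set (Fin 4 → ℂ), IsOpen Ω ∧ iotaR '' A ⊆ Ω ∧
      ∃ Φ : (Fin 4 → ℂ) → ℂ, DifferentiableOn ℂ Φ Ω ∧
        (∀ x ∈ A, Φ (iotaR x) = φ x) ∧
        (∀ z ∈ Ω, ∑ i : Fin 4, pdC i (pdC i Φ) z = 0) ∧
        (∀ z ∈ Ω, ∑ i : Fin 4, (pdC i Φ z) ^ 2 = 0) := by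
  classical
  choose! δ hδ F hF hF1 hF2 hFφ using hloc
  have hcI : Continuous iotaR := by unfold iotaR; fun_prop
  let Φ : (Fin 4 → ℂ) → ℂ := fun z =>
    if h : ∃ x ∈ A, z ∈ Metric.ball (iotaR x) (δ x) then F h.choose z else 0
  have key : ∀ x ∈ A, ∀ z ∈ Metric.ball (iotaR x) (δ x), Φ z = F x z := by
    intro x hx z hz
    have h : ∃ x ∈ A, z ∈ Metric.ball (iotaR x) (δ x) := ⟨x, hx, hz⟩
    have e : Φ z = F h.choose z := dif_pos h
    rw [e]
    obtain ⟨hx', hz'⟩ := h.choose_spec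
    set x' := h.choose
    have := ident_real (Metric.ball (iotaR x') (δ x') ∩ Metric.ball (iotaR x) (δ x))
      (Metric.isOpen_ball.inter Metric.isOpen_ball)
      ((convex_ball _ _).inter (convex_ball _ _))
      (fun z hz => ⟨isOpen_ball_stuff_re _ _ _ hz.1, isOpen_ball_stuff_re _ _ _ hz.2⟩)
      (fun z => F x' z - F x z)
      (((hF x' hx').mono Set.inter_subset_left).sub ((hF x hx).mono Set.inter_subset_right))
      (fun y hy => by rw [(hFφ x' hx' y hy.1).2, (hFφ x hx y hy.2).2, sub_self]) z ⟨hz', hz⟩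
    exact sub_eq_zero.1 this
  have hloceq : ∀ x ∈ A, ∀ z ∈ Metric.ball (iotaR x) (δ x), Φ =ᶠ[nhds z] F x := fun x hx z hz =>
    Filter.eventuallyEq_of_mem (Metric.isOpen_ball.mem_nhds hz) (key x hx)
  have hloceq1 : ∀ x ∈ A, ∀ z ∈ Metric.ball (iotaR x) (δ x), ∀ i,
      pdC i Φ =ᶠ[nhds z] pdC i (F x) := by
    intro x hx z hz i
    filter_upwards [(hloceq x hx z hz).fderiv (𝕜 := ℂ)] with w hw
    unfold pdC; rw [hw]
  have hloceq2 : ∀ x ∈ A, ∀ z ∈ Metric.ball (iotaR x) (δ x), ∀ i,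
      pdC i (pdC i Φ) z = pdC i (pdC i (F x)) z := by
    intro x hx z hz i
    show fderiv ℂ _ _ _ = fderiv ℂ _ _ _
    rw [(hloceq1 x hx z hz i).fderiv_eq]
  -- values at real points
  have hr0 : ∀ x ∈ A, ∀ y, iotaR y ∈ Metric.ball (iotaR x) (δ x) →
      ∀ i, pdC i (F x) (iotaR y) = pd i φ y := by
    intro x hx y hy i
    refine pdC_eq_pd i _ _ _ ((hF x hx).differentiableAt (Metric.isOpen_ball.mem_nhds hy)) ?_
    filter_upwards [(Metric.isOpen_ball.preimage hcI).mem_nhds hy] with w hw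
    exact (hFφ x hx w hw).2
  have hr1 : ∀ x ∈ A, ∀ y, iotaR y ∈ Metric.ball (iotaR x) (δ x) →
      ∀ i, pdC i (pdC i (F x)) (iotaR y) = pd i (pd i φ) y := by
    intro x hx y hy i
    refine pdC_eq_pd i _ _ _ ((hF1 x hx i).differentiableAt (Metric.isOpen_ball.mem_nhds hy)) ?_
    filter_upwards [(Metric.isOpen_ball.preimage hcI).mem_nhds hy] with w hw
    exact hr0 x hx w hw i
  refine ⟨⋃ x ∈ A, Metric.ball (iotaR x) (δ x),
    isOpen_biUnion fun _ _ => Metric.isOpen_ball, ?_, Φ, ?_, ?_, ?_, ?_⟩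
  · rintro _ ⟨x, hx, rfl⟩
    exact Set.mem_biUnion hx (Metric.mem_ball_self (hδ x hx))
  · intro z hz
    obtain ⟨x, hx, hz⟩ := Set.mem_iUnion₂.1 hz
    exact (((hF x hx).differentiableAt (Metric.isOpen_ball.mem_nhds hz)).congr_of_eventuallyEq
      (hloceq x hx z hz)).differentiableWithinAt
  · intro x hx
    rw [key x hx _ (Metric.mem_ball_self (hδ x hx))]
    exact (hFφ x hx x (Metric.mem_ball_self (hδ x hx))).2
  · intro z hz
    obtain ⟨x, hx, hz⟩ := Set.mem_iUnion₂.1 hz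
    simp_rw [hloceq2 x hx z hz]
    refine ident_real _ Metric.isOpen_ball (convex_ball _ _) (isOpen_ball_stuff_re x (δ x))
      (fun z => ∑ i : Fin 4, pdC i (pdC i (F x)) z)
      (DifferentiableOn.fun_sum fun i _ => hF2 x hx i) ?_ z hz
    intro y hy
    simp_rw [hr1 x hx y hy]
    exact hlap y (hFφ x hx y hy).1
  · intro z hz
    obtain ⟨x, hx, hz⟩ := Set.mem_iUnion₂.1 hz
    simp_rw [fun i => (hloceq1 x hx z hz i).eq_of_nhds]
    refine ident_real _ Metric.isOpen_ball (convex_ball _ _) (isOpen_ball_stuff_re x (δ x))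
      (fun z => ∑ i : Fin 4, (pdC i (F x) z) ^ 2)
      (DifferentiableOn.fun_sum fun i _ => (hF1 x hx i).fun_pow 2) ?_ z hz
    intro y hy
    simp_rw [hr0 x hx y hy]
    exact hconf y (hFφ x hx y hy).1

/-- The standard quadratic form on `ℝ⁴`. -/
def q4 (v : Fin 4 → ℝ) : ℝ := ∑ i, v i ^ 2

theorem q4_nonneg (v : Fin 4 → ℝ) : 0 ≤ q4 v := Finset.sum_nonneg fun _ _ => sq_nonneg _

theorem norm_sq_le_q4 (v : Fin 4 → ℝ) : ‖v‖ ^ 2 ≤ q4 v := by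
  have h : ‖v‖ ≤ Real.sqrt (q4 v) := by
    rw [pi_norm_le_iff_of_nonneg (Real.sqrt_nonneg _)]
    intro i
    rw [Real.norm_eq_abs]
    apply Real.abs_le_sqrt
    exact Finset.single_le_sum (f := fun i => v i ^ 2) (fun _ _ => sq_nonneg _) (Finset.mem_univ i)
  calc ‖v‖ ^ 2 ≤ Real.sqrt (q4 v) ^ 2 := by gcongr
    _ = q4 v := Real.sq_sqrt (q4_nonneg v)

theorem q4_contDiff (x : Fin 4 → ℝ) {n : WithTop ℕ∞} : ContDiff ℝ n (fun y => q4 (x - y)) := by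
  unfold q4; simp only [Pi.sub_apply]; fun_prop

theorem q4_line (x y : Fin 4 → ℝ) (i : Fin 4) (t : ℝ) :
    q4 (x - (y + t • Pi.single i 1)) = q4 (x - y) - 2 * t * (x i - y i) + t ^ 2 := by
  fin_cases i <;> simp [q4, Fin.sum_univ_four, Pi.single_apply] <;> ring

theorem k_contDiff (x : Fin 4 → ℝ) {ε : ℝ} (hε : 0 < ε) {n : WithTop ℕ∞} :
    ContDiff ℝ n (fun y => (q4 (x - y) + ε)⁻¹) :=
  ((q4_contDiff x).add contDiff_const).inv fun y => by have := q4_nonneg (x - y); positivity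

theorem hasDerivAt_line (x y : Fin 4 → ℝ) (i : Fin 4) (ε : ℝ) :
    HasDerivAt (fun t : ℝ => q4 (x - (y + t • Pi.single i 1)) + ε) (- 2 * (x i - y i)) 0 := by
  simp_rw [q4_line]
  have h : HasDerivAt (fun t : ℝ => t) 1 0 := hasDerivAt_id 0
  have := (((((h.const_mul 2).mul_const (x i - y i)).const_sub (q4 (x - y))).add (h.pow 2)).add_const ε)
  convert! this using 1
  simp

theorem k_pd (x y : Fin 4 → ℝ) (i : Fin 4) {ε : ℝ} (hε : 0 < ε) :
    fderiv ℝ (fun y => (q4 (x - y) + ε)⁻¹) y (Pi.single i 1) =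
      2 * (x i - y i) * ((q4 (x - y) + ε)⁻¹) ^ 2 := by
  have hd : DifferentiableAt ℝ (fun y => (q4 (x - y) + ε)⁻¹) y :=
    (k_contDiff x hε (n := 1)).differentiable one_ne_zero y
  rw [← hd.lineDeriv_eq_fderiv]
  have hp : q4 (x - y) + ε ≠ 0 := by have := q4_nonneg (x - y); positivity
  have h := (hasDerivAt_line x y i ε).fun_inv (by simpa using hp)
  unfold lineDeriv
  rw [h.deriv]
  simp only [zero_smul, add_zero]
  field_simp

theorem k_pd2 (x y : Fin 4 → ℝ) (i : Fin 4) {ε : ℝ} (hε : 0 < ε) :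
    fderiv ℝ (fun y => 2 * (x i - y i) * ((q4 (x - y) + ε)⁻¹) ^ 2) y (Pi.single i 1) =
      -2 * ((q4 (x - y) + ε)⁻¹) ^ 2 + 8 * (x i - y i) ^ 2 * ((q4 (x - y) + ε)⁻¹) ^ 3 := by
  have hd : DifferentiableAt ℝ (fun y => 2 * (x i - y i) * ((q4 (x - y) + ε)⁻¹) ^ 2) y := by
    have := (k_contDiff x hε (n := 1)).differentiable one_ne_zero
    fun_prop
  rw [← hd.lineDeriv_eq_fderiv]
  have hp : q4 (x - y) + ε ≠ 0 := by have := q4_nonneg (x - y); positivity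
  have h := ((hasDerivAt_line x y i ε).fun_inv (by simpa using hp)).fun_pow 2
  have h2 : HasDerivAt (fun t : ℝ => 2 * (x i - (y + t • (Pi.single i 1 : Fin 4 → ℝ)) i)) (-2) 0 := by
    have h : HasDerivAt (fun t : ℝ => t) 1 0 := hasDerivAt_id 0
    have := (((h.const_add (y i)).const_sub (x i))).const_mul 2
    convert! this using 1
    · simp
    · simp
  unfold lineDeriv
  rw [(h2.fun_mul h).deriv]
  simp only [zero_smul, add_zero]
  simp only [Nat.cast_ofNat, Nat.add_one_sub_one, pow_one]
  field_simp
  ring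

theorem pd_contDiff (i : Fin 4) {u : (Fin 4 → ℝ) → ℂ} (hu : ContDiff ℝ (⊤ : ℕ∞) u) :
    ContDiff ℝ (⊤ : ℕ∞) (pd i u) := by
  unfold pd
  exact (hu.fderiv_right (m := (⊤ : ℕ∞)) le_rfl).clm_apply contDiff_const

theorem pd_compact (i : Fin 4) {u : (Fin 4 → ℝ) → ℂ} (hu : HasCompactSupport u) :
    HasCompactSupport (pd i u) := hu.fderiv_apply (𝕜 := ℝ) _

theorem ibp1 (i : Fin 4) {u : (Fin 4 → ℝ) → ℂ} (hu : ContDiff ℝ (⊤ : ℕ∞) u)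
    (hc : HasCompactSupport u) (k : (Fin 4 → ℝ) → ℝ) (hk : ContDiff ℝ 1 k) :
    ∫ y, k y • pd i u y = - ∫ y, fderiv ℝ k y (Pi.single i 1) • u y := by
  have hk' : Continuous (fun y => fderiv ℝ k y (Pi.single i 1)) :=
    (hk.continuous_fderiv one_ne_zero).clm_apply continuous_const
  refine integral_smul_fderiv_eq_neg_fderiv_smul_of_integrable ?_ ?_ ?_ ?_ ?_
  · exact (hk'.smul hu.continuous).integrable_of_hasCompactSupport hc.smul_left
  · exact (hk.continuous.smul (pd_contDiff i hu).continuous).integrable_of_hasCompactSupport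
      (pd_compact i hc).smul_left
  · exact (hk.continuous.smul hu.continuous).integrable_of_hasCompactSupport hc.smul_left
  · exact fun x _ => hk.differentiable one_ne_zero x
  · exact fun x _ => hu.differentiable (by simp) x

theorem green (x : Fin 4 → ℝ) {ε : ℝ} (hε : 0 < ε) {u : (Fin 4 → ℝ) → ℂ}
    (hu : ContDiff ℝ (⊤ : ℕ∞) u) (hc : HasCompactSupport u) :
    ∫ y, (q4 (x - y) + ε)⁻¹ • ∑ i, pd i (pd i u) y =
      ∫ y, (-8 * ε * ((q4 (x - y) + ε)⁻¹) ^ 3) • u y := by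
  have hk := k_contDiff x hε (n := (⊤ : ℕ∞))
  have hs : ∀ i, ∫ y, (q4 (x - y) + ε)⁻¹ • pd i (pd i u) y =
      ∫ y, (-2 * ((q4 (x - y) + ε)⁻¹) ^ 2 + 8 * (x i - y i) ^ 2 * ((q4 (x - y) + ε)⁻¹) ^ 3) • u y := by
    intro i
    rw [ibp1 i (pd_contDiff i hu) (pd_compact i hc) _ (k_contDiff x hε)]
    simp_rw [k_pd x _ i hε]
    have hk' := k_contDiff x hε (n := 1)
    rw [ibp1 i hu hc _ (by fun_prop), neg_neg]
    simp_rw [k_pd2 x _ i hε]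
  simp_rw [Finset.smul_sum]
  rw [MeasureTheory.integral_finsetSum]
  · simp_rw [hs]
    rw [← MeasureTheory.integral_finsetSum]
    · congr 1
      funext y
      rw [← Finset.sum_smul]
      congr 1
      have hp : q4 (x - y) + ε ≠ 0 := by have := q4_nonneg (x - y); positivity
      rw [Finset.sum_add_distrib, ← Finset.sum_mul, ← Finset.sum_mul, ← Finset.mul_sum]
      have : ∑ i, (x i - y i) ^ 2 = q4 (x - y) := rfl
      rw [this]
      simp only [Finset.sum_const, Finset.card_univ, Fintype.card_fin]
      field_simp
      simp
      ring
    · intro i _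
      have := hk.continuous
      have h2 : Continuous (fun y => (-2 * ((q4 (x - y) + ε)⁻¹) ^ 2 +
          8 * (x i - y i) ^ 2 * ((q4 (x - y) + ε)⁻¹) ^ 3)) := by fun_prop
      exact (h2.smul hu.continuous).integrable_of_hasCompactSupport hc.smul_left
  · intro i _
    exact (hk.continuous.smul (pd_contDiff i (pd_contDiff i hu)).continuous).integrable_of_hasCompactSupport
      (pd_compact i (pd_compact i hc)).smul_left

theorem q4_smul (c : ℝ) (v : Fin 4 → ℝ) : q4 (c • v) = c ^ 2 * q4 v := by
  simp [q4, mul_pow, Finset.mul_sum]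

theorem q4_cont : Continuous q4 := by unfold q4; fun_prop

theorem peak_integrable : MeasureTheory.Integrable (fun v => ((1 + q4 v)⁻¹) ^ 3) := by
  have h := integrable_rpow_neg_one_add_norm_sq (E := Fin 4 → ℝ) (r := 6)
    (μ := MeasureTheory.volume) (by simp; norm_num)
  refine h.mono' ?_ (Filter.Eventually.of_forall fun v => ?_)
  · refine Continuous.aestronglyMeasurable ?_
    have := q4_cont
    refine Continuous.pow (Continuous.inv₀ (by fun_prop) fun v => ?_) 3
    have := q4_nonneg v; positivity
  · have h1 := q4_nonneg v
    have h2 := norm_sq_le_q4 v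
    rw [Real.norm_of_nonneg (by positivity)]
    have : (-6 / 2 : ℝ) = -((3 : ℕ) : ℝ) := by norm_num
    rw [this, Real.rpow_neg (by positivity), Real.rpow_natCast, inv_pow]
    gcongr

theorem peak_pos : 0 < ∫ v, ((1 + q4 v)⁻¹) ^ 3 := by
  have hc : Continuous (fun v => ((1 + q4 v)⁻¹) ^ 3) := by
    have := q4_cont
    refine Continuous.pow (Continuous.inv₀ (by fun_prop) fun v => ?_) 3
    have := q4_nonneg v; positivity
  refine MeasureTheory.integral_pos_of_integrable_nonneg_nonzero (x := 0) hc peak_integrable ?_ ?_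
  · intro v
    have := q4_nonneg v
    positivity
  · simp [q4]

theorem peak_tendsto (x : Fin 4 → ℝ) {u : (Fin 4 → ℝ) → ℂ}
    (hu : Continuous u) (hc : HasCompactSupport u) :
    Filter.Tendsto (fun c : ℝ => ∫ y, (-8 * (c ^ 2)⁻¹ * ((q4 (x - y) + (c ^ 2)⁻¹)⁻¹) ^ 3) • u y)
      Filter.atTop (nhds ((-8 * ∫ v, ((1 + q4 v)⁻¹) ^ 3) • u x)) := by
  set C := ∫ v, ((1 + q4 v)⁻¹) ^ 3 with hC
  have hCp : 0 < C := peak_pos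
  have h := tendsto_integral_comp_smul_smul_of_integrable' (μ := MeasureTheory.volume)
    (F := Fin 4 → ℝ) (φ := fun v => C⁻¹ * ((1 + q4 v)⁻¹) ^ 3) (g := u) (x₀ := x)
    (fun v => by have := q4_nonneg v; positivity)
    (by rw [MeasureTheory.integral_const_mul, ← hC, inv_mul_cancel₀ hCp.ne'])
    (by
      have h1 : Filter.Tendsto (fun v : Fin 4 → ℝ => C⁻¹ * (‖v‖ ^ 2)⁻¹) (Bornology.cobounded _)
          (nhds (C⁻¹ * 0)) :=
        (((Filter.tendsto_pow_atTop two_ne_zero).comp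
          tendsto_norm_cobounded_atTop).inv_tendsto_atTop).const_mul _
      rw [mul_zero] at h1
      refine squeeze_zero' (Filter.Eventually.of_forall fun v => ?_) ?_ h1
      · have := q4_nonneg v; positivity
      · filter_upwards [(tendsto_norm_cobounded_atTop (E := Fin 4 → ℝ)).eventually_gt_atTop 0]
          with v hv
        have h2 := norm_sq_le_q4 v
        have h3 : ((1 + q4 v)⁻¹) ^ 3 ≤ ((‖v‖ ^ 2)⁻¹) ^ 3 := by
          have h4 := q4_nonneg v
          refine pow_le_pow_left₀ (by positivity) ?_ 3
          gcongr
          linarith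
        have e : Module.finrank ℝ (Fin 4 → ℝ) = 4 := by simp
        rw [e]
        calc ‖v‖ ^ 4 * (C⁻¹ * ((1 + q4 v)⁻¹) ^ 3) ≤ ‖v‖ ^ 4 * (C⁻¹ * ((‖v‖ ^ 2)⁻¹) ^ 3) := by
              gcongr
          _ = C⁻¹ * (‖v‖ ^ 2)⁻¹ := by field_simp)
    (hu.integrable_of_hasCompactSupport hc) hu.continuousAt
  have h' := h.const_smul (-8 * C)
  refine h'.congr' ?_
  filter_upwards [Filter.eventually_gt_atTop 0] with c hc0
  rw [← MeasureTheory.integral_smul]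
  congr 1
  funext y
  rw [smul_smul]
  congr 1
  have e : Module.finrank ℝ (Fin 4 → ℝ) = 4 := by simp
  rw [e, q4_smul]
  have := q4_nonneg (x - y)
  have h1 : q4 (x - y) + (c ^ 2)⁻¹ = (1 + c ^ 2 * q4 (x - y)) * (c ^ 2)⁻¹ := by
    field_simp; ring
  rw [h1]
  have h2 : 1 + c ^ 2 * q4 (x - y) ≠ 0 := by positivity
  field_simp

theorem represent (x : Fin 4 → ℝ) {u : (Fin 4 → ℝ) → ℂ} {d : ℝ} (hd : 0 < d)
    (hu : ContDiff ℝ (⊤ : ℕ∞) u) (hc : HasCompactSupport u)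
    (h0 : ∀ y, ‖x - y‖ < d → ∑ i, pd i (pd i u) y = 0) :
    ∫ y, (q4 (x - y))⁻¹ • ∑ i, pd i (pd i u) y = (-8 * ∫ v, ((1 + q4 v)⁻¹) ^ 3) • u x := by
  refine tendsto_nhds_unique ?_ (peak_tendsto x hu.continuous hc)
  have hgc : Continuous (fun y => ∑ i, pd i (pd i u) y) :=
    continuous_finsetSum _ fun i _ => (pd_contDiff i (pd_contDiff i hu)).continuous
  have hgi : MeasureTheory.Integrable (fun y => ∑ i, pd i (pd i u) y) :=
    MeasureTheory.integrable_finsetSum _ fun i _ =>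
      (pd_contDiff i (pd_contDiff i hu)).continuous.integrable_of_hasCompactSupport
        (pd_compact i (pd_compact i hc))
  have key : Filter.Tendsto
      (fun c : ℝ => ∫ y, (q4 (x - y) + (c ^ 2)⁻¹)⁻¹ • ∑ i, pd i (pd i u) y) Filter.atTop
      (nhds (∫ y, (q4 (x - y))⁻¹ • ∑ i, pd i (pd i u) y)) := by
    refine MeasureTheory.tendsto_integral_filter_of_dominated_convergence
      (fun y => (d ^ 2)⁻¹ * ‖∑ i, pd i (pd i u) y‖) ?_ ?_ (hgi.norm.const_mul _) ?_
    · filter_upwards [Filter.eventually_gt_atTop 0] with c hc0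
      exact ((k_contDiff x (by positivity) (n := 1)).continuous.smul hgc).aestronglyMeasurable
    · filter_upwards [Filter.eventually_gt_atTop 0] with c hc0
      refine Filter.Eventually.of_forall fun y => ?_
      by_cases hy : ‖x - y‖ < d
      · rw [h0 y hy]; simp
      · have h1 := norm_sq_le_q4 (x - y)
        push Not at hy
        have h2 : d ^ 2 ≤ ‖x - y‖ ^ 2 := by gcongr
        have h3 : 0 < (c ^ 2)⁻¹ := by positivity
        have h4 := q4_nonneg (x - y)
        rw [norm_smul, Real.norm_of_nonneg (by positivity)]
        gcongr
        linarith
    · refine Filter.Eventually.of_forall fun y => ?_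
      by_cases hy : ‖x - y‖ < d
      · rw [h0 y hy]; simp
      · have h1 := norm_sq_le_q4 (x - y)
        push Not at hy
        have h2 : d ^ 2 ≤ ‖x - y‖ ^ 2 := by gcongr
        have h3 : 0 < d ^ 2 := by positivity
        have h5 : Filter.Tendsto (fun c : ℝ => (c ^ 2)⁻¹) Filter.atTop (nhds 0) :=
          (Filter.tendsto_pow_atTop two_ne_zero).inv_tendsto_atTop
        have h6 := h5.const_add (q4 (x - y))
        rw [add_zero] at h6
        exact (h6.inv₀ (by linarith)).smul_const _
  refine key.congr' ?_
  filter_upwards [Filter.eventually_gt_atTop 0] with c hc0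
  exact green x (by positivity) hu hc

theorem param_hasFDerivAt (W B : Set (Fin 4 → ℂ)) (hW : IsOpen W) (hB : IsOpen B)
    (h : (Fin 4 → ℂ) → ℂ) (hh : ContDiffOn ℂ 1 h W)
    (S : Set (Fin 4 → ℝ)) (hS : IsCompact S) (g : (Fin 4 → ℝ) → ℂ) (hg : Continuous g)
    (hWB : ∀ z ∈ B, ∀ y ∈ S, z - iotaR y ∈ W) (z : Fin 4 → ℂ) (hz : z ∈ B) :
    HasFDerivAt (fun z => ∫ y in S, g y * h (z - iotaR y))
      (∫ y in S, g y • fderiv ℂ h (z - iotaR y)) z := by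
  have hcI : Continuous iotaR := by unfold iotaR; fun_prop
  obtain ⟨δ, hδ, hδB⟩ := Metric.nhds_basis_closedBall.mem_iff.1 (hB.mem_nhds hz)
  have hch : ContinuousOn h W := hh.continuousOn
  have hcf : ContinuousOn (fderiv ℂ h) W := hh.continuousOn_fderiv_of_isOpen hW le_rfl
  have hc1 : ∀ z ∈ B, ContinuousOn (fun y => g y * h (z - iotaR y)) S := fun z hz =>
    hg.continuousOn.mul (hch.comp (by fun_prop) (fun y hy => hWB z hz y hy))
  have hc2 : ∀ z ∈ B, ContinuousOn (fun y => g y • fderiv ℂ h (z - iotaR y)) S := fun z hz =>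
    hg.continuousOn.smul (hcf.comp (by fun_prop) (fun y hy => hWB z hz y hy))
  have hK : IsCompact (Metric.closedBall z δ ×ˢ S) := (isCompact_closedBall z δ).prod hS
  have hc3 : ContinuousOn (fun p : (Fin 4 → ℂ) × (Fin 4 → ℝ) =>
      g p.2 • fderiv ℂ h (p.1 - iotaR p.2)) (Metric.closedBall z δ ×ˢ S) :=
    (hg.comp continuous_snd).continuousOn.smul
      (hcf.comp (by fun_prop) (fun p hp => hWB _ (hδB hp.1) _ hp.2))
  obtain ⟨C, hC⟩ := hK.exists_bound_of_continuousOn hc3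
  refine hasFDerivAt_integral_of_dominated_of_fderiv_le (s := Metric.closedBall z δ)
    (F := fun z y => g y * h (z - iotaR y))
    (F' := fun z y => g y • fderiv ℂ h (z - iotaR y)) (bound := fun _ => C)
    (Metric.closedBall_mem_nhds z hδ) ?_ ?_ ?_ ?_ ?_ ?_
  · filter_upwards [hB.mem_nhds hz] with w hw
    exact (hc1 w hw).aestronglyMeasurable hS.measurableSet
  · exact (hc1 z hz).integrableOn_compact hS
  · exact (hc2 z hz).aestronglyMeasurable hS.measurableSet
  · filter_upwards [MeasureTheory.ae_restrict_mem hS.measurableSet] with y hy w hw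
    exact hC (w, y) ⟨hw, hy⟩
  · exact (continuousOn_const (c := C)).integrableOn_compact hS
  · filter_upwards [MeasureTheory.ae_restrict_mem hS.measurableSet] with y hy w hw
    have hd : DifferentiableAt ℂ h (w - iotaR y) :=
      (hh.differentiableOn one_ne_zero).differentiableAt (hW.mem_nhds (hWB w (hδB hw) y hy))
    have := hd.hasFDerivAt.comp w ((hasFDerivAt_id w).sub_const (iotaR y))
    simpa using this.const_mul (g y)

theorem param_pdC (W B : Set (Fin 4 → ℂ)) (hW : IsOpen W) (hB : IsOpen B)
    (h : (Fin 4 → ℂ) → ℂ) (hh : ContDiffOn ℂ 1 h W)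
    (S : Set (Fin 4 → ℝ)) (hS : IsCompact S) (g : (Fin 4 → ℝ) → ℂ) (hg : Continuous g)
    (hWB : ∀ z ∈ B, ∀ y ∈ S, z - iotaR y ∈ W) (i : Fin 4) (z : Fin 4 → ℂ) (hz : z ∈ B) :
    pdC i (fun z => ∫ y in S, g y * h (z - iotaR y)) z =
      ∫ y in S, g y * pdC i h (z - iotaR y) := by
  have hcI : Continuous iotaR := by unfold iotaR; fun_prop
  have hcf : ContinuousOn (fderiv ℂ h) W := hh.continuousOn_fderiv_of_isOpen hW le_rfl
  have hc2 : ContinuousOn (fun y => g y • fderiv ℂ h (z - iotaR y)) S := 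
    hg.continuousOn.smul (hcf.comp (by fun_prop) (fun y hy => hWB z hz y hy))
  unfold pdC
  rw [(param_hasFDerivAt W B hW hB h hh S hS g hg hWB z hz).fderiv]
  rw [ContinuousLinearMap.integral_apply (hc2.integrableOn_compact hS)]
  simp

theorem param_all (W B : Set (Fin 4 → ℂ)) (hW : IsOpen W) (hB : IsOpen B)
    (h : (Fin 4 → ℂ) → ℂ) (hh : ContDiffOn ℂ 3 h W)
    (S : Set (Fin 4 → ℝ)) (hS : IsCompact S) (g : (Fin 4 → ℝ) → ℂ) (hg : Continuous g)
    (hWB : ∀ z ∈ B, ∀ y ∈ S, z - iotaR y ∈ W) (F : (Fin 4 → ℂ) → ℂ)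
    (hF : F = fun z => ∫ y in S, g y * h (z - iotaR y)) :
    DifferentiableOn ℂ F B ∧ (∀ i, DifferentiableOn ℂ (pdC i F) B) ∧
      (∀ i, DifferentiableOn ℂ (pdC i (pdC i F)) B) := by
  subst hF
  have h1 : ∀ i, ContDiffOn ℂ 2 (pdC i h) W := fun i =>
    (hh.fderiv_of_isOpen hW (m := 2) (by norm_num)).clm_apply contDiffOn_const
  have h2 : ∀ i, ContDiffOn ℂ 1 (pdC i (pdC i h)) W := fun i =>
    ((h1 i).fderiv_of_isOpen hW (m := 1) (by norm_num)).clm_apply contDiffOn_const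
  have d : ∀ k : (Fin 4 → ℂ) → ℂ, ContDiffOn ℂ 1 k W →
      DifferentiableOn ℂ (fun z => ∫ y in S, g y * k (z - iotaR y)) B := fun k hk z hz =>
    (param_hasFDerivAt W B hW hB k hk S hS g hg hWB z hz).differentiableAt.differentiableWithinAt
  have hh' : ContDiffOn ℂ 1 h W := hh.of_le (by norm_num)
  have h1' : ∀ i, ContDiffOn ℂ 1 (pdC i h) W := fun i => (h1 i).of_le (by norm_num)
  have e1 := fun i => param_pdC W B hW hB h hh' S hS g hg hWB i
  refine ⟨d h hh', fun i => (d _ (h1' i)).congr (e1 i), fun i => (d _ (h2 i)).congr ?_⟩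
  intro z hz
  rw [← param_pdC W B hW hB _ (h1' i) S hS g hg hWB i z hz]
  have : pdC i (fun z => ∫ y in S, g y * h (z - iotaR y)) =ᶠ[nhds z]
      fun z => ∫ y in S, g y * pdC i h (z - iotaR y) :=
    Filter.eventuallyEq_of_mem (hB.mem_nhds hz) (e1 i)
  show fderiv ℂ _ _ _ = fderiv ℂ _ _ _
  rw [this.fderiv_eq]

theorem local_ext (A : Set (Fin 4 → ℝ)) (hA : IsOpen A)
    (φ : (Fin 4 → ℝ) → ℂ) (hφ : ContDiffOn ℝ (⊤ : ℕ∞) φ A)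
    (hlap : ∀ x ∈ A, ∑ i : Fin 4, pd i (pd i φ) x = 0) (x : Fin 4 → ℝ) (hx : x ∈ A) :
    ∃ δ > 0, ∃ F : (Fin 4 → ℂ) → ℂ,
      DifferentiableOn ℂ F (Metric.ball (iotaR x) δ) ∧
      (∀ i, DifferentiableOn ℂ (pdC i F) (Metric.ball (iotaR x) δ)) ∧
      (∀ i, DifferentiableOn ℂ (pdC i (pdC i F)) (Metric.ball (iotaR x) δ)) ∧
      (∀ y, iotaR y ∈ Metric.ball (iotaR x) δ → y ∈ A ∧ F (iotaR y) = φ y) := by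
  obtain ⟨R, hR, hRA⟩ := Metric.nhds_basis_closedBall.mem_iff.1 (hA.mem_nhds hx)
  obtain ⟨r, hr, hrR⟩ : ∃ r > 0, 2 * r = R := ⟨R / 2, by positivity, by ring⟩
  let χ : ContDiffBump x := ⟨r, 2 * r, hr, by linarith⟩
  have hχs : tsupport χ = Metric.closedBall x (2 * r) := χ.tsupport_eq
  let u : (Fin 4 → ℝ) → ℂ := fun y => χ y • φ y
  have hus : tsupport u ⊆ Metric.closedBall x (2 * r) := by
    rw [← hχs]; exact tsupport_smul_subset_left _ _
  have huA : tsupport u ⊆ A := hus.trans (by rw [hrR]; exact hRA)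
  have hu : ContDiff ℝ (⊤ : ℕ∞) u := by
    refine contDiff_iff_contDiffAt.2 fun y => ?_
    by_cases hy : y ∈ tsupport u
    swap
    · exact contDiffAt_const.congr_of_eventuallyEq (notMem_tsupport_iff_eventuallyEq.1 hy)
    exact χ.contDiff.contDiffAt.smul (hφ.contDiffAt (hA.mem_nhds (huA hy)))
  have hc : HasCompactSupport u := χ.hasCompactSupport.smul_right
  have huφ : ∀ y ∈ Metric.ball x r, u y = φ y := by
    intro y hy
    have : χ y = 1 := χ.one_of_mem_closedBall (Metric.ball_subset_closedBall hy)
    simp [u, this]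
  have hrA : Metric.ball x r ⊆ A := fun y hy => hRA (by
    rw [Metric.mem_closedBall]; rw [Metric.mem_ball] at hy; linarith)
  let g : (Fin 4 → ℝ) → ℂ := fun y => ∑ i, pd i (pd i u) y
  have hgc : Continuous g :=
    continuous_finsetSum _ fun i _ => (pd_contDiff i (pd_contDiff i hu)).continuous
  have hg0 : ∀ y ∈ Metric.ball x r, g y = 0 := by
    intro y hy
    rw [← hlap y (hrA hy)]
    refine Finset.sum_congr rfl fun i _ => ?_
    have h0 : u =ᶠ[nhds y] φ := Filter.eventuallyEq_of_mem (Metric.isOpen_ball.mem_nhds hy) huφ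
    have h1 : pd i u =ᶠ[nhds y] pd i φ := by
      filter_upwards [h0.fderiv (𝕜 := ℝ)] with w hw
      unfold pd; rw [hw]
    show fderiv ℝ _ _ _ = fderiv ℝ _ _ _
    rw [h1.fderiv_eq]
  have hgs : ∀ y, y ∉ Metric.closedBall x (2 * r) → g y = 0 := by
    intro y hy
    refine Finset.sum_eq_zero fun i _ => ?_
    refine image_eq_zero_of_notMem_tsupport fun h => hy (hus ?_)
    exact (tsupport_fderiv_apply_subset ℝ _).trans (tsupport_fderiv_apply_subset ℝ _) h
  let S : Set (Fin 4 → ℝ) := Metric.closedBall x (2 * r) \ Metric.ball x r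
  have hS : IsCompact S := (isCompact_closedBall x (2 * r)).diff Metric.isOpen_ball
  have hgS : ∀ y, y ∉ S → g y = 0 := by
    intro y hy
    by_cases h : y ∈ Metric.ball x r
    · exact hg0 y h
    · exact hgs y fun h' => hy ⟨h', h⟩
  let Q : (Fin 4 → ℂ) → ℂ := fun z => ∑ i, z i ^ 2
  have hQ : ContDiff ℂ 3 Q := by fun_prop
  let W : Set (Fin 4 → ℂ) := {z | Q z ≠ 0}
  have hW : IsOpen W := isOpen_ne.preimage hQ.continuous
  set C := ∫ v, ((1 + q4 v)⁻¹) ^ 3 with hC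
  have hCp : 0 < C := peak_pos
  let h : (Fin 4 → ℂ) → ℂ := fun z => ((-8 * C)⁻¹ : ℝ) * (Q z)⁻¹
  have hh : ContDiffOn ℂ 3 h W := contDiffOn_const.mul (hQ.contDiffOn.inv fun z hz => hz)
  have hWB : ∀ z ∈ Metric.ball (iotaR x) (r / 4), ∀ y ∈ S, z - iotaR y ∈ W := by
    intro z hz y hy hQ0
    have hre : (Q (z - iotaR y)).re = q4 ((fun i => (z i).re) - y) - q4 (fun i => (z i).im) := by
      simp [Q, q4, iotaR, ← Finset.sum_sub_distrib, pow_two]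
    have hz1 : ∀ i, ‖z i - x i‖ ≤ r / 4 := fun i => by
      have := norm_le_pi_norm (z - iotaR x) i
      rw [mem_ball_iff_norm] at hz
      exact this.trans hz.le
    have him : q4 (fun i => (z i).im) ≤ 4 * (r / 4) ^ 2 := by
      have : ∀ i, (z i).im ^ 2 ≤ (r / 4) ^ 2 := fun i => by
        refine sq_le_sq' ?_ ?_ <;>
        · have h1 := Complex.abs_im_le_norm (z i - x i)
          have h2 := hz1 i
          simp only [Complex.sub_im, Complex.ofReal_im, sub_zero] at h1
          have := abs_le.1 (h1.trans h2)
          linarith [this.1, this.2]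
      calc q4 (fun i => (z i).im) ≤ ∑ _i : Fin 4, (r / 4) ^ 2 := Finset.sum_le_sum fun i _ => this i
        _ = _ := by simp
    have hd1 : ‖(fun i => (z i).re) - x‖ ≤ r / 4 := by
      rw [pi_norm_le_iff_of_nonneg (by positivity)]
      intro i
      have h1 := Complex.abs_re_le_norm (z i - x i)
      simp only [Complex.sub_re, Complex.ofReal_re] at h1
      exact h1.trans (hz1 i)
    have hd2 : r ≤ ‖y - x‖ := by
      have := hy.2
      rw [mem_ball_iff_norm] at this
      linarith
    have hd3 : ‖y - x‖ ≤ ‖(fun i => (z i).re) - x‖ + ‖(fun i => (z i).re) - y‖ := by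
      have := norm_sub_le ((fun i => (z i).re) - x) ((fun i => (z i).re) - y)
      simpa using this
    have hd4 : 3 / 4 * r ≤ ‖(fun i => (z i).re) - y‖ := by linarith
    have hd5 : (3 / 4 * r) ^ 2 ≤ ‖(fun i => (z i).re) - y‖ ^ 2 := by gcongr
    have hd6 := norm_sq_le_q4 ((fun i => (z i).re) - y)
    rw [hQ0, Complex.zero_re] at hre
    nlinarith [sq_pos_of_pos hr]
  obtain ⟨a1, a2, a3⟩ := param_all W _ hW Metric.isOpen_ball h hh S hS g hgc hWB _ rfl
  refine ⟨r / 4, by positivity, _, a1, a2, a3, ?_⟩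
  intro y hy
  have hy1 : ‖y - x‖ < r / 4 := by
    rw [mem_ball_iff_norm] at hy
    refine lt_of_le_of_lt ?_ hy
    rw [pi_norm_le_iff_of_nonneg (norm_nonneg _)]
    intro i
    refine le_trans ?_ (norm_le_pi_norm _ i)
    rw [Pi.sub_apply, Pi.sub_apply, iotaR, iotaR, ← Complex.ofReal_sub, Complex.norm_real]
  have hyr : y ∈ Metric.ball x r := by rw [mem_ball_iff_norm]; linarith
  refine ⟨hrA hyr, ?_⟩
  have hrep := represent y (d := r / 2) (by positivity) hu hc (fun w hw => hg0 w (by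
    rw [mem_ball_iff_norm]
    have := norm_sub_le (y - x) (y - w)
    have e : (y - x) - (y - w) = w - x := by abel
    rw [e] at this
    linarith))
  rw [← huφ y hyr]
  show ∫ w in S, g w * h (iotaR y - iotaR w) = u y
  rw [MeasureTheory.setIntegral_eq_integral_of_forall_compl_eq_zero
    (fun w hw => by rw [hgS w hw, zero_mul])]
  have e : ∀ w, g w * h (iotaR y - iotaR w) = (-8 * C)⁻¹ • ((q4 (y - w))⁻¹ • g w) := by
    intro w
    have : Q (iotaR y - iotaR w) = (q4 (y - w) : ℂ) := by simp [Q, q4, iotaR]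
    simp only [h, this, Complex.real_smul]
    push_cast
    ring
  simp_rw [e]
  rw [MeasureTheory.integral_smul]
  show (-8 * C)⁻¹ • (∫ w, (q4 (y - w))⁻¹ • ∑ i, pd i (pd i u) w) = u y
  rw [hrep, smul_smul, inv_mul_cancel₀ (by simp [hCp.ne']), one_smul]

/-- Proposition 7.3(ii), Euclidean case: every smooth harmonic morphism `φ` from an open
subset of `ℝ⁴` to `ℂ` is the restriction to the real points of a complex-harmonic morphism
`Φ` on an open subset of `ℂ⁴`. -/
theorem harmonic_morphism_extends_to_complex_harmonic_morphism
    (A : Set (Fin 4 → ℝ)) (hA : IsOpen A)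
    (φ : (Fin 4 → ℝ) → ℂ) (hφ : ContDiffOn ℝ (⊤ : ℕ∞) φ A)
    (hlap : ∀ x ∈ A, ∑ i : Fin 4, pd i (pd i φ) x = 0)
    (hconf : ∀ x ∈ A, ∑ i : Fin 4, (pd i φ x) ^ 2 = 0) :
    ∃ Ω : Set (Fin 4 → ℂ), IsOpen Ω ∧ iotaR '' A ⊆ Ω ∧
      ∃ Φ : (Fin 4 → ℂ) → ℂ, DifferentiableOn ℂ Φ Ω ∧
        (∀ x ∈ A, Φ (iotaR x) = φ x) ∧
        (∀ z ∈ Ω, ∑ i : Fin 4, pdC i (pdC i Φ) z = 0) ∧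
        (∀ z ∈ Ω, ∑ i : Fin 4, (pdC i Φ z) ^ 2 = 0) := by
  exact glue A φ hlap hconf (local_ext A hA φ hφ hlap)


end
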